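/- arXiv:2103.06207 — 3 statements merged into one kernel-verified Lean document; each statement's English description precedes it below -/
import Mathlib

section
/- In the Curie–Weiss model with β ≥ 0 and h > 0, the mean magnetization satisfies |⟨M⟩ − tanh(h + β⟨M⟩)| ≤ (β/(Nh)) · (3 + β + log(1 + β/h)). -/
/-!
For `β > 0`, the Hubbard–Stratonovich transformation replaces the spins by one real variable `Y`
with density `W(y) ∝ exp (-N (y - h)² / (2 β)) cosh(y)^N`, for which `⟨M⟩ = E tanh Y`
(`cw_hubbard_stratonovich`). Integrating `W'` gives `E Y = h + β ⟨M⟩ =: a`, so the claim compares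
`E tanh Y` with `tanh (E Y)`.

Variance bound. Put `t = N h / β`. Integrating `(y W)'` as well, the inequality `t Var Y ≤ E Y`
becomes equivalent to `E[Y] E[Y tanh Y] ≤ E[Y²] E[tanh Y]`. Folding the line at the origin turns
`W` into a weight proportional to `cosh (t y)` times an even function, and odd integrands pick up a
factor `tanh (t y)`. The inequality is then Chebyshev's association inequality for the functions
`tanh y / y` and `tanh (t y) / y`, both non-increasing on the positive half-line, under the
measure with density `y²` times the folded weight (`cwW_chebyshev`). It plays the part of the GHS
inequality.

Taylor bound. For `a > 0` and all real `y`, the first-order Taylor remainder of `tanh` at `a` is at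
most `3 (y - a)² / a` (`cw_tanh_taylor`). Hence `|E tanh Y - tanh a| ≤ (3 / a) Var Y ≤ 3 / t`, that
is `3 β / (N h)`, and the other terms of the stated bound are non-negative. For `β = 0` the spins
are independent and `⟨M⟩ = tanh h`.
-/

open MeasureTheory

/-! ### Inequalities for the hyperbolic tangent -/

lemma cw_tanh_nonneg {x : ℝ} (hx : 0 ≤ x) : 0 ≤ Real.tanh x := by
  rw [Real.tanh_eq_sinh_div_cosh]
  exact div_nonneg (Real.sinh_nonneg_iff.2 hx) (Real.cosh_pos x).le

lemma cw_tanh_sub (x y : ℝ) :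
    Real.tanh x - Real.tanh y = Real.tanh (x - y) * (1 - Real.tanh x * Real.tanh y) := by
  have hx := (Real.cosh_pos x).ne'
  have hy := (Real.cosh_pos y).ne'
  have hd := (Real.cosh_pos (x - y)).ne'
  have hd' := hd
  simp only [Real.tanh_eq_sinh_div_cosh]
  rw [Real.cosh_sub] at hd
  rw [Real.sinh_sub, Real.cosh_sub]
  field_simp

lemma cw_one_sub_tanh_mul_pos (x y : ℝ) : 0 < 1 - Real.tanh x * Real.tanh y := by
  have hx := abs_lt.1 (Real.abs_tanh_lt_one x)
  have hy := abs_lt.1 (Real.abs_tanh_lt_one y)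
  nlinarith

lemma cw_tanh_mono {x y : ℝ} (h : x ≤ y) : Real.tanh x ≤ Real.tanh y := by
  have h1 := cw_tanh_sub y x
  have h2 := cw_tanh_nonneg (sub_nonneg.2 h)
  have h3 := cw_one_sub_tanh_mul_pos y x
  nlinarith [mul_nonneg h2 h3.le]

lemma cw_sech_sq_le (x : ℝ) : (1 - Real.tanh x ^ 2) * (1 + x ^ 2) ≤ 1 := by
  have hc := Real.cosh_pos x
  have h1 := Real.cosh_sq x
  have h2 : x ^ 2 ≤ Real.sinh x ^ 2 := by
    rcases le_total 0 x with h | h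
    · have := Real.self_le_sinh_iff.2 h
      nlinarith
    · have := Real.self_le_sinh_iff.2 (neg_nonneg.2 h)
      rw [Real.sinh_neg] at this
      nlinarith
  have h3 : 1 - Real.tanh x ^ 2 = 1 / Real.cosh x ^ 2 := by
    rw [Real.tanh_eq_sinh_div_cosh]
    field_simp
    linarith
  rw [h3, div_mul_eq_mul_div, div_le_one (by positivity)]
  linarith

/-- For `x ≥ 0`, `x / (1 + x) ≤ tanh x ≤ x`. -/
lemma cw_tanh_bounds {x : ℝ} (hx : 0 ≤ x) :
    x ≤ (1 + x) * Real.tanh x ∧ Real.tanh x ≤ x := by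
  have hc := Real.cosh_pos x
  constructor
  · rw [Real.tanh_eq_sinh_div_cosh, ← mul_div_assoc, le_div_iff₀ hc]
    have h1 := Real.cosh_sub_sinh x
    have h2 := Real.add_one_le_exp x
    have h3 := Real.cosh_add_sinh x
    have h4 : Real.exp x * Real.exp (-x) = 1 := by rw [← Real.exp_add]; simp
    -- The claim reads `x e⁻ˣ ≤ sinh x`.
    have h5 := Real.self_le_sinh_iff.2 hx
    have h6 : Real.exp (-x) ≤ 1 := Real.exp_le_one_iff.2 (by linarith)
    nlinarith
  · rw [Real.tanh_eq_sinh_div_cosh, div_le_iff₀ hc]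
    have h : MonotoneOn (fun y => y * Real.cosh y - Real.sinh y) (Set.Ici 0) := by
      apply monotoneOn_of_deriv_nonneg (convex_Ici 0) (by fun_prop) (by fun_prop)
      intro y hy
      rw [interior_Ici] at hy
      have hd : HasDerivAt (fun y => y * Real.cosh y - Real.sinh y)
          (1 * Real.cosh y + y * Real.sinh y - Real.cosh y) y :=
        ((hasDerivAt_id y).mul (Real.hasDerivAt_cosh y)).sub (Real.hasDerivAt_sinh y)
      rw [hd.deriv]
      have hy0 : 0 ≤ y := le_of_lt hy
      have := mul_nonneg hy0 (Real.sinh_nonneg_iff.2 hy0)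
      linarith
    have := h (Set.mem_Ici.2 le_rfl) (Set.mem_Ici.2 hx) hx
    simp at this
    linarith

lemma cw_abs_tanh_le (x : ℝ) : |Real.tanh x| ≤ |x| := by
  rcases le_total 0 x with h | h
  · rw [abs_of_nonneg h, abs_of_nonneg (cw_tanh_nonneg h)]
    exact (cw_tanh_bounds h).2
  · have h' := neg_nonneg.2 h
    rw [← abs_neg x, ← abs_neg (Real.tanh x), ← Real.tanh_neg, abs_of_nonneg h',
      abs_of_nonneg (cw_tanh_nonneg h')]
    exact (cw_tanh_bounds h').2

lemma cw_abs_tanh_sub_self_le (x : ℝ) : |Real.tanh x - x| ≤ x ^ 2 := by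
  have key : ∀ y : ℝ, 0 ≤ y → |Real.tanh y - y| ≤ y ^ 2 := by
    intro y hy
    obtain ⟨h1, h2⟩ := cw_tanh_bounds hy
    rw [abs_le]
    constructor <;> nlinarith
  rcases le_total 0 x with h | h
  · exact key x h
  · have := key (-x) (by linarith)
    rw [Real.tanh_neg, ← abs_neg] at this
    convert this using 1
    · congr 1; ring
    · ring

/-- The first-order Taylor remainder of `tanh` at `a > 0` is at most `3 (y - a)² / a`, for every
real `y`. The gain of the factor `1 / a` comes from the decay of `1 - tanh²` near `a`, and from
`|y - a| ≥ a / 2` elsewhere. -/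
lemma cw_tanh_taylor {a : ℝ} (ha : 0 < a) (y : ℝ) :
    |Real.tanh y - Real.tanh a - (1 - Real.tanh a ^ 2) * (y - a)| ≤ 3 / a * (y - a) ^ 2 := by
  have hsub := cw_tanh_sub y a
  have hpos := cw_one_sub_tanh_mul_pos y a
  have hp1 := cw_abs_tanh_le (y - a)
  have hp2 := (Real.abs_tanh_lt_one (y - a)).le
  have hp3 := cw_abs_tanh_sub_self_le (y - a)
  have hT0 := cw_tanh_nonneg ha.le
  have hT1 := (Real.tanh_lt_one a).le
  have hS := cw_sech_sq_le a
  have hu0 := (Real.neg_one_lt_tanh y).le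
  have hTT : 0 ≤ 1 - Real.tanh a ^ 2 := by nlinarith
  have hp4 : Real.tanh (y - a) ^ 2 ≤ |y - a| := by
    rw [← sq_abs]; nlinarith [abs_nonneg (Real.tanh (y - a))]
  have hp5 : Real.tanh (y - a) ^ 2 ≤ (y - a) ^ 2 := sq_le_sq.2 hp1
  have hquad : a * (Real.tanh (y - a) ^ 2 * (1 - Real.tanh y * Real.tanh a))
      ≤ 2 * (y - a) ^ 2 := by
    have hpp := sq_nonneg (Real.tanh (y - a))
    rcases le_total (a / 2) y with h | h
    · have h1 := cw_tanh_mono h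
      have h2 := cw_tanh_mono (show a / 2 ≤ a by linarith)
      have h3 := cw_tanh_nonneg (show 0 ≤ a / 2 by linarith)
      have h4 := cw_sech_sq_le (a / 2)
      have h5 : 1 - Real.tanh y * Real.tanh a ≤ 1 - Real.tanh (a / 2) ^ 2 := by nlinarith
      have h6 : a ≤ 1 + (a / 2) ^ 2 := by nlinarith [sq_nonneg (a / 2 - 1)]
      have h7 : a * (1 - Real.tanh y * Real.tanh a) ≤ 1 := by
        nlinarith [mul_le_mul h6 h5 hpos.le (by positivity)]
      nlinarith [mul_le_mul_of_nonneg_left h7 hpp]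
    · have hd : |y - a| = a - y := by rw [abs_of_nonpos (by linarith)]; ring
      rw [hd] at hp4
      rcases le_total 0 y with h0 | h0
      · have h1 := cw_tanh_nonneg h0
        have h2 : 1 - Real.tanh y * Real.tanh a ≤ 1 := by nlinarith
        have h3 : Real.tanh (y - a) ^ 2 * (1 - Real.tanh y * Real.tanh a) ≤ a - y := by nlinarith
        nlinarith
      · have h2 : 1 - Real.tanh y * Real.tanh a ≤ 2 := by nlinarith
        have h3 : Real.tanh (y - a) ^ 2 * (1 - Real.tanh y * Real.tanh a) ≤ 2 * (a - y) := by
          nlinarith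
        nlinarith
  have hlin : a * (|Real.tanh (y - a) - (y - a)| * (1 - Real.tanh a ^ 2)) ≤ (y - a) ^ 2 := by
    have h1 : a * (1 - Real.tanh a ^ 2) ≤ 1 := by nlinarith [sq_nonneg (a - 1)]
    have := mul_le_mul hp3 h1 (by positivity) (sq_nonneg _)
    linarith
  have hid : Real.tanh y - Real.tanh a - (1 - Real.tanh a ^ 2) * (y - a)
      = (Real.tanh (y - a) - (y - a)) * (1 - Real.tanh a ^ 2)
        - Real.tanh a * (Real.tanh (y - a) ^ 2 * (1 - Real.tanh y * Real.tanh a)) := by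
    linear_combination (1 - Real.tanh a * Real.tanh (y - a)) * hsub
  rw [hid, div_mul_eq_mul_div, le_div_iff₀ ha]
  have hq0 : 0 ≤ Real.tanh (y - a) ^ 2 * (1 - Real.tanh y * Real.tanh a) :=
    mul_nonneg (sq_nonneg _) hpos.le
  have h1 := abs_sub ((Real.tanh (y - a) - (y - a)) * (1 - Real.tanh a ^ 2))
    (Real.tanh a * (Real.tanh (y - a) ^ 2 * (1 - Real.tanh y * Real.tanh a)))
  rw [abs_mul, abs_of_nonneg hTT, abs_of_nonneg (mul_nonneg hT0 hq0)] at h1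
  have h2 : Real.tanh a * (Real.tanh (y - a) ^ 2 * (1 - Real.tanh y * Real.tanh a)) ≤
      Real.tanh (y - a) ^ 2 * (1 - Real.tanh y * Real.tanh a) := by nlinarith
  nlinarith

/-- `tanh x / x` is non-increasing on the positive half-line. -/
lemma cw_tanh_div_anti {x y : ℝ} (hx : 0 < x) (hxy : x ≤ y) :
    x * Real.tanh y ≤ y * Real.tanh x := by
  have hdt : ∀ z, HasDerivAt Real.tanh (1 / Real.cosh z ^ 2) z := by
    intro z
    have hc := (Real.cosh_pos z).ne'
    have h := (Real.hasDerivAt_sinh z).div (Real.hasDerivAt_cosh z) hc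
    have he : Real.tanh = Real.sinh / Real.cosh := by
      ext w; simp [Real.tanh_eq_sinh_div_cosh]
    rw [he]
    refine h.congr_deriv ?_
    congr 1
    linarith [Real.cosh_sq z]
  have hd : ∀ z, HasDerivAt (fun z => z * Real.tanh x - x * Real.tanh z)
      (1 * Real.tanh x - x * (1 / Real.cosh z ^ 2)) z := fun z =>
    ((hasDerivAt_id z).mul_const _).sub ((hdt z).const_mul x)
  have h : MonotoneOn (fun z => z * Real.tanh x - x * Real.tanh z) (Set.Ici x) := by
    apply monotoneOn_of_deriv_nonneg (convex_Ici x)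
      (fun z _ => (hd z).continuousAt.continuousWithinAt)
      (fun z _ => (hd z).differentiableAt.differentiableWithinAt)
    intro z hz
    rw [interior_Ici] at hz
    have hz' : x < z := hz
    rw [(hd z).deriv, Real.tanh_eq_sinh_div_cosh]
    have hc : Real.cosh x ≤ Real.cosh z := by
      rw [Real.cosh_le_cosh, abs_of_pos hx, abs_of_pos (hx.trans hz')]; exact hz'.le
    have hc0 := Real.cosh_pos x
    have hc1 := Real.one_le_cosh x
    have hs := Real.self_le_sinh_iff.2 hx.le
    have h1 : x * (1 / Real.cosh z ^ 2) ≤ x * (1 / Real.cosh x ^ 2) := by gcongr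
    have h2 : x * (1 / Real.cosh x ^ 2) ≤ Real.sinh x / Real.cosh x := by
      rw [mul_one_div, div_le_div_iff₀ (by positivity) hc0]
      nlinarith [mul_le_mul hs hc1 zero_le_one (hx.le.trans hs)]
    linarith
  have := h (Set.mem_Ici.2 le_rfl) (Set.mem_Ici.2 hxy) hxy
  simp at this
  linarith

/-- Since `tanh y / y` and `tanh (t y) / y` are both even and non-increasing in `|y|`, their
increments between any two points have the same sign. -/
lemma cw_chebyshev_pointwise {t : ℝ} (ht : 0 < t) (x y : ℝ) :
    0 ≤ (x * Real.tanh y - y * Real.tanh x) *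
      (x * Real.tanh (t * y) - y * Real.tanh (t * x)) := by
  have ordered : ∀ x y : ℝ, 0 < x → x ≤ y →
      0 ≤ (x * Real.tanh y - y * Real.tanh x) *
        (x * Real.tanh (t * y) - y * Real.tanh (t * x)) := by
    intro x y hx hxy
    have h1 := cw_tanh_div_anti hx hxy
    have h2 := cw_tanh_div_anti (mul_pos ht hx) (mul_le_mul_of_nonneg_left hxy ht.le)
    have h3 : x * Real.tanh (t * y) ≤ y * Real.tanh (t * x) := by
      refine le_of_mul_le_mul_left ?_ ht
      linarith
    exact mul_nonneg_of_nonpos_of_nonpos (by linarith) (by linarith)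
  have pos : ∀ x y : ℝ, 0 ≤ x → 0 ≤ y →
      0 ≤ (x * Real.tanh y - y * Real.tanh x) *
        (x * Real.tanh (t * y) - y * Real.tanh (t * x)) := by
    intro x y hx hy
    rcases hx.eq_or_lt with rfl | hx
    · simp
    rcases hy.eq_or_lt with rfl | hy
    · simp
    rcases le_total x y with h | h
    · exact ordered x y hx h
    · have := ordered y x hy h
      linarith
  have half : ∀ x y : ℝ, 0 ≤ x →
      0 ≤ (x * Real.tanh y - y * Real.tanh x) *
        (x * Real.tanh (t * y) - y * Real.tanh (t * x)) := by
    intro x y hx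
    rcases le_total 0 y with hy | hy
    · exact pos x y hx hy
    · have := pos x (-y) hx (by linarith)
      simp only [mul_neg, Real.tanh_neg] at this
      linarith
  rcases le_total 0 x with hx | hx
  · exact half x y hx
  · have := half (-x) y (by linarith)
    simp only [mul_neg, Real.tanh_neg] at this
    linarith

/-! ### The Hubbard–Stratonovich weight -/

/-- The unnormalised density `exp (-b y² + t y) cosh(y)^N` of the field `y` felt by a single spin
after the Hubbard–Stratonovich transformation. The Curie–Weiss model with `β > 0` corresponds to
`b = N / (2 β)` and `t = N h / β`; then `-b y² + t y` is `-N (y - h)² / (2 β)` up to a constant. -/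
noncomputable def cwW (N : ℕ) (b t y : ℝ) : ℝ :=
  Real.exp (-b * y ^ 2 + t * y) * Real.cosh y ^ N

lemma cwW_pos (N : ℕ) (b t y : ℝ) : 0 < cwW N b t y :=
  mul_pos (Real.exp_pos _) (pow_pos (Real.cosh_pos y) N)

lemma cwW_continuous (N : ℕ) (b t : ℝ) : Continuous (cwW N b t) := by
  unfold cwW
  fun_prop

lemma cw_tanh_continuous : Continuous Real.tanh := by
  have he : Real.tanh = fun x => Real.sinh x / Real.cosh x := by
    ext w; exact Real.tanh_eq_sinh_div_cosh w
  rw [he]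
  exact Real.continuous_sinh.div Real.continuous_cosh fun x => (Real.cosh_pos x).ne'

lemma cwW_integrable (N : ℕ) {b : ℝ} (hb : 0 < b) (t : ℝ) {f : ℝ → ℝ} (hf : Continuous f)
    (C : ℝ) (hC : ∀ y, |f y| ≤ C * (1 + y ^ 2)) : Integrable (fun y => f y * cwW N b t y) := by
  set c : ℝ := |t| + N with hc
  have hc0 : 0 ≤ c := by positivity
  have hg : Integrable (fun y : ℝ =>
      C * ((1 + 4 / b) * Real.exp (c ^ 2 / b)) * Real.exp (-(b / 2) * y ^ 2)) :=
    (integrable_exp_neg_mul_sq (half_pos hb)).const_mul _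
  refine hg.mono' (hf.mul (cwW_continuous N b t)).aestronglyMeasurable (ae_of_all _ fun y => ?_)
  have hC0 : 0 ≤ C := by
    have h := (abs_nonneg _).trans (hC 0)
    simpa using h
  have h1 : cwW N b t y ≤ Real.exp (-b * y ^ 2 + c * |y|) := by
    have hcosh : Real.cosh y ≤ Real.exp |y| := by
      rw [← Real.cosh_abs, Real.cosh_eq]
      have := Real.exp_le_exp.2 (show -|y| ≤ |y| by linarith [abs_nonneg y])
      linarith
    have h2 : Real.cosh y ^ N ≤ Real.exp (N * |y|) := by
      rw [Real.exp_nat_mul]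
      exact pow_le_pow_left₀ (Real.cosh_pos y).le hcosh N
    have h3 : t * y ≤ |t| * |y| := by rw [← abs_mul]; exact le_abs_self _
    calc cwW N b t y ≤ Real.exp (-b * y ^ 2 + |t| * |y|) * Real.exp (N * |y|) := by
          unfold cwW; gcongr
      _ = _ := by rw [← Real.exp_add, hc]; congr 1; ring
  have h4 : c * |y| ≤ b / 4 * y ^ 2 + c ^ 2 / b := by
    have : b / 4 * y ^ 2 + c ^ 2 / b - c * |y| = (b * |y| / 2 - c) ^ 2 / b := by
      rw [← sq_abs y]; field_simp; ring
    have h5 : 0 ≤ (b * |y| / 2 - c) ^ 2 / b := by positivity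
    linarith
  have h5 : 1 + y ^ 2 ≤ (1 + 4 / b) * Real.exp (b / 4 * y ^ 2) := by
    have h6 := Real.add_one_le_exp (b / 4 * y ^ 2)
    have h7 : (1 + 4 / b) * (b / 4 * y ^ 2 + 1) = 1 + y ^ 2 + (4 / b + b / 4 * y ^ 2) := by
      field_simp; ring
    have h8 : 0 ≤ 4 / b + b / 4 * y ^ 2 := by positivity
    have h9 := mul_le_mul_of_nonneg_left h6 (show 0 ≤ 1 + 4 / b by positivity)
    linarith
  rw [Real.norm_eq_abs, abs_mul, abs_of_pos (cwW_pos N b t y)]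
  calc |f y| * cwW N b t y
      ≤ (C * ((1 + 4 / b) * Real.exp (b / 4 * y ^ 2))) *
          Real.exp (-b * y ^ 2 + (b / 4 * y ^ 2 + c ^ 2 / b)) := by
        have hfy : |f y| ≤ C * ((1 + 4 / b) * Real.exp (b / 4 * y ^ 2)) :=
          (hC y).trans (mul_le_mul_of_nonneg_left h5 hC0)
        have hW : cwW N b t y ≤ Real.exp (-b * y ^ 2 + (b / 4 * y ^ 2 + c ^ 2 / b)) :=
          h1.trans (Real.exp_le_exp.2 (by linarith))
        exact mul_le_mul hfy hW (cwW_pos N b t y).le ((abs_nonneg _).trans hfy)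
    _ = _ := by
        have : Real.exp (b / 4 * y ^ 2) * Real.exp (-b * y ^ 2 + (b / 4 * y ^ 2 + c ^ 2 / b))
            = Real.exp (c ^ 2 / b) * Real.exp (-(b / 2) * y ^ 2) := by
          rw [← Real.exp_add, ← Real.exp_add]; congr 1; ring
        linear_combination C * (1 + 4 / b) * this

lemma cwW_hasDerivAt (N : ℕ) (b t y : ℝ) :
    HasDerivAt (cwW N b t) ((-(2 * b) * y + t + N * Real.tanh y) * cwW N b t y) y := by
  have hc := (Real.cosh_pos y).ne'
  have h1 : HasDerivAt (fun y : ℝ => -b * y ^ 2 + t * y) (-b * (2 * y) + t) y := by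
    have := ((hasDerivAt_pow 2 y).const_mul (-b)).add ((hasDerivAt_id y).const_mul t)
    refine this.congr_deriv ?_
    simp
  have h2 := h1.exp.mul ((Real.hasDerivAt_cosh y).pow N)
  refine h2.congr_deriv ?_
  unfold cwW
  rw [Real.tanh_eq_sinh_div_cosh]
  rcases N with _ | n
  · simp; ring
  · simp only [Nat.add_sub_cancel, pow_succ, Pi.pow_apply]
    field_simp

lemma cwW_neg (N : ℕ) (b t y : ℝ) :
    cwW N b t y - cwW N b t (-y) = Real.tanh (t * y) * (cwW N b t y + cwW N b t (-y)) := by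
  have h1 : cwW N b t y = Real.exp (-b * y ^ 2) * Real.cosh y ^ N * Real.exp (t * y) := by
    unfold cwW; rw [Real.exp_add]; ring
  have h2 : cwW N b t (-y) = Real.exp (-b * y ^ 2) * Real.cosh y ^ N * Real.exp (-(t * y)) := by
    unfold cwW; rw [Real.exp_add, Real.cosh_neg, neg_sq, mul_neg]; ring
  have := Real.exp_pos (t * y)
  have := Real.exp_pos (-(t * y))
  rw [h1, h2, Real.tanh_eq, div_mul_eq_mul_div, eq_div_iff (by positivity)]
  ring

/-! ### Variance bound and mean-field equation for the weight -/

lemma cwW_fold_even (N : ℕ) (b t : ℝ) {f : ℝ → ℝ} (hf : ∀ y, f (-y) = f y)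
    (hi : Integrable (fun y => f y * cwW N b t y)) :
    Integrable (fun y => f y * (cwW N b t y + cwW N b t (-y))) ∧
      ∫ y, f y * (cwW N b t y + cwW N b t (-y)) = 2 * ∫ y, f y * cwW N b t y := by
  have hi' := hi.comp_neg
  have he := integral_neg_eq_self (fun y => f y * cwW N b t y) volume
  simp only [hf] at hi' he
  simp only [mul_add]
  exact ⟨hi.add hi', by rw [integral_add hi hi', he]; ring⟩

lemma cwW_fold_odd (N : ℕ) (b t : ℝ) {f : ℝ → ℝ} (hf : ∀ y, f (-y) = -f y)
    (hi : Integrable (fun y => f y * cwW N b t y)) :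
    Integrable (fun y => f y * (cwW N b t y - cwW N b t (-y))) ∧
      ∫ y, f y * (cwW N b t y - cwW N b t (-y)) = 2 * ∫ y, f y * cwW N b t y := by
  have hi' := hi.comp_neg
  have he := integral_neg_eq_self (fun y => f y * cwW N b t y) volume
  simp only [hf, neg_mul] at hi' he
  simp only [mul_sub]
  simp only [sub_eq_add_neg]
  exact ⟨hi.add hi', by rw [integral_add hi hi', he]; ring⟩

lemma cw_integral_lincomb {f₁ f₂ f₃ f₄ : ℝ → ℝ} (h₁ : Integrable f₁) (h₂ : Integrable f₂)
    (h₃ : Integrable f₃) (h₄ : Integrable f₄) (c₁ c₂ c₃ c₄ : ℝ) :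
    ∫ y, (c₁ * f₁ y + c₂ * f₂ y + c₃ * f₃ y + c₄ * f₄ y) =
      c₁ * (∫ y, f₁ y) + c₂ * (∫ y, f₂ y) + c₃ * (∫ y, f₃ y) + c₄ * ∫ y, f₄ y := by
  have h₁₂ : Integrable (fun y => c₁ * f₁ y + c₂ * f₂ y) :=
    (h₁.const_mul _).add (h₂.const_mul _)
  have h₁₃ : Integrable (fun y => c₁ * f₁ y + c₂ * f₂ y + c₃ * f₃ y) := h₁₂.add (h₃.const_mul _)
  rw [integral_add h₁₃ (h₄.const_mul _), integral_add h₁₂ (h₃.const_mul _),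
    integral_add (h₁.const_mul _) (h₂.const_mul _)]
  simp only [integral_const_mul]

/-- Chebyshev's association inequality for the folded weight `y² (W(y) + W(-y))` and the
functions `tanh y / y`, `tanh (t y) / y`, with denominators cleared. Combined with
integration by parts, it bounds the variance of `y` by its mean divided by `t`. -/
lemma cwW_chebyshev (N : ℕ) {b t : ℝ} (ht : 0 < t)
    (i1 : Integrable (fun y => y * cwW N b t y))
    (i2 : Integrable (fun y => y ^ 2 * cwW N b t y))
    (j0 : Integrable (fun y => Real.tanh y * cwW N b t y))
    (j1 : Integrable (fun y => y * Real.tanh y * cwW N b t y)) :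
    (∫ y, y * cwW N b t y) * (∫ y, y * Real.tanh y * cwW N b t y) ≤
      (∫ y, y ^ 2 * cwW N b t y) * (∫ y, Real.tanh y * cwW N b t y) := by
  obtain ⟨iB1, hB1⟩ := cwW_fold_odd N b t (f := fun y => y) (fun y => rfl) i1
  obtain ⟨iA2, hA2⟩ := cwW_fold_even N b t (f := fun y => y ^ 2) (fun y => by ring) i2
  obtain ⟨iT, hT⟩ := cwW_fold_odd N b t (f := Real.tanh) Real.tanh_neg j0
  obtain ⟨iB2, hB2⟩ := cwW_fold_even N b t (f := fun y => y * Real.tanh y)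
    (fun y => by rw [Real.tanh_neg]; ring) j1
  have hpt : ∀ x y : ℝ,
      0 ≤ (x * Real.tanh y - y * Real.tanh x) *
        (x * (cwW N b t x + cwW N b t (-x)) * (cwW N b t y - cwW N b t (-y)) -
          y * (cwW N b t x - cwW N b t (-x)) * (cwW N b t y + cwW N b t (-y))) := by
    intro x y
    have hP : ∀ z, 0 < cwW N b t z + cwW N b t (-z) := fun z =>
      add_pos (cwW_pos _ _ _ _) (cwW_pos _ _ _ _)
    have h := mul_nonneg (cw_chebyshev_pointwise ht x y) (mul_pos (hP x) (hP y)).le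
    rw [cwW_neg N b t x, cwW_neg N b t y]
    refine h.trans_eq ?_
    ring
  generalize hPdef : (fun y => cwW N b t y + cwW N b t (-y)) = P at *
  generalize hQdef : (fun y => cwW N b t y - cwW N b t (-y)) = Q at *
  have hP' : ∀ y, cwW N b t y + cwW N b t (-y) = P y := fun y => congrFun hPdef y
  have hQ' : ∀ y, cwW N b t y - cwW N b t (-y) = Q y := fun y => congrFun hQdef y
  simp only [hP', hQ'] at *
  have hx : ∀ x : ℝ, 0 ≤ x ^ 2 * P x * (∫ y, Real.tanh y * Q y)
      + -(x * Q x) * (∫ y, y * Real.tanh y * P y)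
      + -(x * Real.tanh x * P x) * (∫ y, y * Q y) + Real.tanh x * Q x * (∫ y, y ^ 2 * P y) := by
    intro x
    rw [← cw_integral_lincomb iT iB2 iB1 iA2]
    refine integral_nonneg fun y => ?_
    have := hpt x y
    simp only [Pi.zero_apply]
    linarith
  have hxx : 0 ≤ ∫ x, ((∫ y, Real.tanh y * Q y) * (x ^ 2 * P x)
      + -(∫ y, y * Real.tanh y * P y) * (x * Q x)
      + -(∫ y, y * Q y) * (x * Real.tanh x * P x)
      + (∫ y, y ^ 2 * P y) * (Real.tanh x * Q x)) := by
    refine integral_nonneg fun x => ?_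
    have := hx x
    simp only [Pi.zero_apply]
    linarith
  rw [cw_integral_lincomb iA2 iB1 iB2 iT, hA2, hB1, hB2, hT] at hxx
  linarith

/-- The mean-field equation for the weight `cwW`: writing `m` for the mean of `tanh` under
`cwW N b t`, the mean of `y` is `(t + N m) / (2 b)`, and `tanh` almost commutes with the mean. -/
lemma cwW_mean_field (N : ℕ) {b t m : ℝ} (hb : 0 < b) (ht : 0 < t)
    (hm : m = (∫ y, Real.tanh y * cwW N b t y) / ∫ y, cwW N b t y) :
    |m - Real.tanh ((t + N * m) / (2 * b))| ≤ 3 / t := by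
  have htc := cw_tanh_continuous
  have ht1 : ∀ y, |Real.tanh y| ≤ 1 := fun y => (Real.abs_tanh_lt_one y).le
  have hlin : ∀ y : ℝ, |y| ≤ 1 + y ^ 2 := fun y => by
    rw [← sq_abs]; nlinarith [sq_nonneg (|y| - 1)]
  have i0 : Integrable (fun y => cwW N b t y) := by
    have := cwW_integrable N hb t (f := fun _ => 1) (by fun_prop) 1
      (fun y => by rw [abs_one]; nlinarith [sq_nonneg y])
    simpa using this
  have i1 : Integrable (fun y => y * cwW N b t y) :=
    cwW_integrable N hb t (f := fun y => y) (by fun_prop) 1 (fun y => by linarith [hlin y])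
  have i2 : Integrable (fun y => y ^ 2 * cwW N b t y) :=
    cwW_integrable N hb t (f := fun y => y ^ 2) (by fun_prop) 1
      (fun y => by rw [abs_of_nonneg (sq_nonneg y)]; linarith)
  have j0 : Integrable (fun y => Real.tanh y * cwW N b t y) :=
    cwW_integrable N hb t (f := Real.tanh) htc 1
      (fun y => by nlinarith [sq_nonneg y, ht1 y])
  have j1 : Integrable (fun y => y * Real.tanh y * cwW N b t y) :=
    cwW_integrable N hb t (f := fun y => y * Real.tanh y) (by fun_prop) 1
      (fun y => by
        rw [abs_mul]
        nlinarith [hlin y, mul_le_mul_of_nonneg_left (ht1 y) (abs_nonneg y)])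
  have hI0 : 0 < ∫ y, cwW N b t y := by
    rw [integral_pos_iff_support_of_nonneg (fun y => (cwW_pos N b t y).le) i0]
    have : Function.support (fun y => cwW N b t y) = Set.univ :=
      Set.eq_univ_of_forall fun y => (cwW_pos N b t y).ne'
    rw [this]
    simp
  have hcheb := cwW_chebyshev N ht i1 i2 j0 j1
  have hT0 : 0 ≤ ∫ y, Real.tanh y * cwW N b t y := by
    have h := (cwW_fold_odd N b t (f := Real.tanh) Real.tanh_neg j0).2
    have h2 : 0 ≤ ∫ y, Real.tanh y * (cwW N b t y - cwW N b t (-y)) := by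
      refine integral_nonneg fun y => ?_
      simp only [Pi.zero_apply]
      rw [cwW_neg, ← mul_assoc]
      refine mul_nonneg ?_ (add_pos (cwW_pos _ _ _ _) (cwW_pos _ _ _ _)).le
      rcases le_total 0 y with hy | hy
      · exact mul_nonneg (cw_tanh_nonneg hy) (cw_tanh_nonneg (mul_nonneg ht.le hy))
      · have h3 := cw_tanh_nonneg (neg_nonneg.2 hy)
        have h4 := cw_tanh_nonneg (mul_nonneg ht.le (neg_nonneg.2 hy))
        rw [mul_neg, Real.tanh_neg] at h4
        rw [Real.tanh_neg] at h3
        nlinarith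
    linarith
  -- The derivatives of `W` and of `y W` integrate to zero.
  have hE1 : -(2 * b) * (∫ y, y * cwW N b t y) + t * (∫ y, cwW N b t y)
      + N * (∫ y, Real.tanh y * cwW N b t y) = 0 := by
    have hl := cw_integral_lincomb i1 i0 j0 i0 (-(2 * b)) t N 0
    have hint := (((i1.const_mul (-(2 * b))).add (i0.const_mul t)).add (j0.const_mul N)).add
      (i0.const_mul 0)
    have hz := integral_eq_zero_of_hasDerivAt_of_integrable
      (fun y => (cwW_hasDerivAt N b t y).congr_deriv
        (show _ = -(2 * b) * (y * cwW N b t y) + t * cwW N b t y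
          + N * (Real.tanh y * cwW N b t y) + 0 * cwW N b t y by ring)) hint i0
    rw [hz] at hl
    linarith
  have hE2 : (∫ y, cwW N b t y) + -(2 * b) * (∫ y, y ^ 2 * cwW N b t y)
      + t * (∫ y, y * cwW N b t y) + N * (∫ y, y * Real.tanh y * cwW N b t y) = 0 := by
    have hl := cw_integral_lincomb i0 i2 i1 j1 1 (-(2 * b)) t N
    have hint := (((i0.const_mul 1).add (i2.const_mul (-(2 * b)))).add (i1.const_mul t)).add
      (j1.const_mul N)
    have hz := integral_eq_zero_of_hasDerivAt_of_integrable
      (fun y => ((hasDerivAt_id y).mul (cwW_hasDerivAt N b t y)).congr_deriv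
        (show _ = 1 * cwW N b t y + -(2 * b) * (y ^ 2 * cwW N b t y) + t * (y * cwW N b t y)
          + N * (y * Real.tanh y * cwW N b t y) by simp only [id]; ring)) hint i1
    rw [hz] at hl
    linarith
  generalize hI0d : ∫ y, cwW N b t y = I0 at *
  generalize hI1d : ∫ y, y * cwW N b t y = I1 at *
  generalize hI2d : ∫ y, y ^ 2 * cwW N b t y = I2 at *
  generalize hT0d : ∫ y, Real.tanh y * cwW N b t y = T0 at *
  generalize hT1d : ∫ y, y * Real.tanh y * cwW N b t y = T1 at *
  have hmI : T0 = m * I0 := by rw [hm]; field_simp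
  have hm0 : 0 ≤ m := by rw [hm]; positivity
  set a := (t + N * m) / (2 * b) with ha
  have ha0 : 0 < a := by positivity
  have haI : I1 = a * I0 := by
    have h2 : 2 * b * a = t + N * m := by rw [ha]; field_simp
    have h3 : 2 * b * I1 = 2 * b * (a * I0) := by rw [hmI] at hE1; linear_combination -hE1 - I0 * h2
    exact mul_left_cancel₀ (by positivity) h3
  -- The variance bound `Var ≤ a / t`.
  have hvar : t * (I2 - a ^ 2 * I0) ≤ a * I0 := by
    have h1 : t * (I0 * I2 - I1 ^ 2) ≤ I0 * I1 := by
      have h2 : I1 * (N * T1) ≤ I2 * (N * T0) := by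
        have := mul_le_mul_of_nonneg_left hcheb (Nat.cast_nonneg (α := ℝ) N)
        linarith
      have h3 : N * T1 = 2 * b * I2 - t * I1 - I0 := by linarith
      have h4 : N * T0 = 2 * b * I1 - t * I0 := by linarith
      rw [h3, h4] at h2
      linarith
    rw [haI] at h1
    refine le_of_mul_le_mul_left ?_ hI0
    linarith
  have hsq : Integrable (fun y => 3 / a * (y - a) ^ 2 * cwW N b t y) := by
    refine (((i2.const_mul (3 / a)).add (i1.const_mul (3 / a * (-2 * a)))).add
      (i0.const_mul (3 / a * a ^ 2))).congr (ae_of_all _ fun y => ?_)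
    simp only [Pi.add_apply]
    ring
  have hsqI : ∫ y, 3 / a * (y - a) ^ 2 * cwW N b t y = 3 / a * (I2 - a ^ 2 * I0) := by
    have hl := cw_integral_lincomb i2 i1 i0 i0 (3 / a) (3 / a * (-2 * a)) (3 / a * a ^ 2) 0
    rw [hI2d, hI1d, hI0d, haI] at hl
    rw [show 3 / a * (I2 - a ^ 2 * I0) = _ from (by ring : _ = _).trans hl.symm]
    congr 1
    ext y
    ring
  have hrem : ∫ y, (Real.tanh y - Real.tanh a - (1 - Real.tanh a ^ 2) * (y - a)) * cwW N b t y
      = (m - Real.tanh a) * I0 := by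
    have hl := cw_integral_lincomb j0 i1 i0 i0 1 (-(1 - Real.tanh a ^ 2))
      (-Real.tanh a + (1 - Real.tanh a ^ 2) * a) 0
    rw [hT0d, hI1d, hI0d, haI, hmI] at hl
    rw [show (m - Real.tanh a) * I0 = _ from (by ring : _ = _).trans hl.symm]
    congr 1
    ext y
    ring
  have hb1 : |(m - Real.tanh a) * I0| ≤ 3 / a * (I2 - a ^ 2 * I0) := by
    rw [← hrem, ← hsqI, ← Real.norm_eq_abs]
    refine norm_integral_le_of_norm_le hsq (ae_of_all _ fun y => ?_)
    rw [Real.norm_eq_abs, abs_mul, abs_of_pos (cwW_pos N b t y)]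
    exact mul_le_mul_of_nonneg_right (cw_tanh_taylor ha0 y) (cwW_pos N b t y).le
  rw [abs_mul, abs_of_pos hI0] at hb1
  refine le_of_mul_le_mul_right (hb1.trans ?_) hI0
  rw [div_mul_eq_mul_div, div_mul_eq_mul_div, div_le_div_iff₀ ha0 ht]
  linarith

/-! ### From spins to the weight -/

lemma cw_sum_exp (N : ℕ) (spin : Bool → ℝ) (hspin : spin = fun b => if b then 1 else -1)
    (y : ℝ) :
    ∑ σ : Fin N → Bool, Real.exp ((∑ i, spin (σ i)) * y) = (2 * Real.cosh y) ^ N := by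
  have h : ∀ σ : Fin N → Bool,
      Real.exp ((∑ i, spin (σ i)) * y) = ∏ i, Real.exp (spin (σ i) * y) := fun σ => by
    rw [Finset.sum_mul, Real.exp_sum]
  simp_rw [h]
  rw [← Fintype.prod_sum (fun (_ : Fin N) (c : Bool) => Real.exp (spin c * y))]
  simp [hspin, Real.cosh_eq]
  ring

/-- Obtained by differentiating `cw_sum_exp` in `y`. -/
lemma cw_sum_mul_exp (N : ℕ) (spin : Bool → ℝ) (hspin : spin = fun b => if b then 1 else -1)
    (y : ℝ) :
    ∑ σ : Fin N → Bool, (∑ i, spin (σ i)) * Real.exp ((∑ i, spin (σ i)) * y) =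
      N * Real.tanh y * (2 * Real.cosh y) ^ N := by
  have h1 : HasDerivAt
      (fun y => ∑ σ : Fin N → Bool, Real.exp ((∑ i, spin (σ i)) * y))
      (∑ σ : Fin N → Bool, Real.exp ((∑ i, spin (σ i)) * y) * ((∑ i, spin (σ i)) * 1)) y :=
    HasDerivAt.fun_sum fun σ _ => ((hasDerivAt_id y).const_mul _).exp
  have h2 : HasDerivAt (fun y => (2 * Real.cosh y) ^ N)
      (N * (2 * Real.cosh y) ^ (N - 1) * (2 * Real.sinh y)) y :=
    ((Real.hasDerivAt_cosh y).const_mul 2).fun_pow N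
  simp_rw [cw_sum_exp N spin hspin] at h1
  have h3 := h1.unique h2
  calc _ = ∑ σ : Fin N → Bool, Real.exp ((∑ i, spin (σ i)) * y) * ((∑ i, spin (σ i)) * 1) :=
        Finset.sum_congr rfl fun σ _ => by ring
    _ = _ := h3
    _ = _ := by
      have hc := (Real.cosh_pos y).ne'
      rw [Real.tanh_eq_sinh_div_cosh]
      rcases N with _ | n
      · simp
      · rw [Nat.add_sub_cancel, pow_succ]
        field_simp

lemma cw_gaussian {b : ℝ} (hb : 0 < b) (c : ℝ) :
    Integrable (fun y : ℝ => Real.exp (-b * y ^ 2 + c * y)) ∧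
      ∫ y : ℝ, Real.exp (-b * y ^ 2 + c * y) =
        Real.exp (c ^ 2 / (4 * b)) * √(Real.pi / b) := by
  have h : (fun y : ℝ => Real.exp (-b * y ^ 2 + c * y)) = fun y =>
      Real.exp (c ^ 2 / (4 * b)) * Real.exp (-b * (y - c / (2 * b)) ^ 2) := by
    ext y
    rw [← Real.exp_add]
    congr 1
    field_simp
    ring
  rw [h]
  refine ⟨((integrable_exp_neg_mul_sq hb).comp_sub_right _).const_mul _, ?_⟩
  rw [integral_const_mul, integral_sub_right_eq_self (fun y => Real.exp (-b * y ^ 2)),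
    integral_gaussian]

/-- The Hubbard–Stratonovich transformation: the magnetization is the mean of `tanh` under
`cwW` with `b = N / (2 β)` and `t = N h / β`. -/
lemma cw_hubbard_stratonovich (N : ℕ) (hN : 1 ≤ N) {β h : ℝ} (hβ : 0 < β)
    (spin : Bool → ℝ) (hspin : spin = fun b => if b then 1 else -1) :
    (∑ σ : Fin N → Bool, (∑ i, spin (σ i)) / N *
        Real.exp (β / (2 * N) * (∑ i, spin (σ i)) ^ 2 + h * ∑ i, spin (σ i))) /
      (∑ σ : Fin N → Bool,
        Real.exp (β / (2 * N) * (∑ i, spin (σ i)) ^ 2 + h * ∑ i, spin (σ i))) =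
    (∫ y, Real.tanh y * cwW N (N / (2 * β)) (N * h / β) y) /
      ∫ y, cwW N (N / (2 * β)) (N * h / β) y := by
  have hN0 : (0 : ℝ) < N := by exact_mod_cast hN
  set b : ℝ := N / (2 * β) with hb
  set t : ℝ := N * h / β with ht
  have hb0 : 0 < b := by positivity
  set K : ℝ := Real.exp (t ^ 2 / (4 * b)) * √(Real.pi / b) with hK
  have hK0 : 0 < K := by positivity
  set S : (Fin N → Bool) → ℝ := fun σ => ∑ i, spin (σ i) with hS
  have hg : ∀ s : ℝ, ∫ y : ℝ, Real.exp (-b * y ^ 2 + (t + s) * y) =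
      K * Real.exp (β / (2 * N) * s ^ 2 + h * s) := by
    intro s
    rw [(cw_gaussian hb0 (t + s)).2, hK, mul_right_comm, ← Real.exp_add]
    congr 2
    rw [ht, hb]
    field_simp
    ring
  have hsplit : ∀ s y : ℝ, Real.exp (-b * y ^ 2 + (t + s) * y) =
      Real.exp (-b * y ^ 2 + t * y) * Real.exp (s * y) := fun s y => by
    rw [← Real.exp_add]; congr 1; ring
  have hden : 2 ^ N * ∫ y, cwW N b t y =
      K * ∑ σ, Real.exp (β / (2 * N) * S σ ^ 2 + h * S σ) := by
    rw [Finset.mul_sum, ← integral_const_mul]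
    simp_rw [← hg]
    rw [← integral_finsetSum _ fun σ _ => (cw_gaussian hb0 _).1]
    congr 1
    ext y
    simp_rw [hsplit]
    rw [← Finset.mul_sum, cw_sum_exp N spin hspin, cwW, mul_pow]
    ring
  have hnum : 2 ^ N * ∫ y, Real.tanh y * cwW N b t y =
      K * ∑ σ, S σ / N * Real.exp (β / (2 * N) * S σ ^ 2 + h * S σ) := by
    rw [Finset.mul_sum, ← integral_const_mul]
    simp_rw [mul_left_comm K, ← hg, ← integral_const_mul]
    rw [← integral_finsetSum _ fun σ _ => (cw_gaussian hb0 _).1.const_mul _]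
    congr 1
    ext y
    have h1 := cw_sum_mul_exp N spin hspin y
    have h2 : ∑ σ, S σ / N * Real.exp (-b * y ^ 2 + (t + S σ) * y) =
        Real.exp (-b * y ^ 2 + t * y) / N * ∑ σ, S σ * Real.exp (S σ * y) := by
      rw [Finset.mul_sum]
      refine Finset.sum_congr rfl fun σ _ => ?_
      rw [hsplit]
      ring
    rw [h2, h1, cwW, mul_pow]
    field_simp
  rw [← mul_div_mul_left _ _ hK0.ne', ← hnum, ← hden, mul_div_mul_left _ _ (by positivity)]

/-- **Curie–Weiss mean-field equation with error bound.** For `β ≥ 0` and `h > 0`,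
`|⟨M⟩ - tanh(h + β⟨M⟩)| ≤ (β/(Nh))(3 + β + log(1 + β/h))`. -/
theorem curie_weiss_mean_field_equation
    (N : ℕ) (hN : 1 ≤ N)
    (β hfield : ℝ) (hβ : 0 ≤ β) (hh : 0 < hfield)
    (spin : Bool → ℝ) (hspin : spin = fun b => if b then 1 else -1)
    (H : (Fin N → Bool) → ℝ)
    (hH : ∀ σ, H σ = -(β / (2 * N)) * (∑ i, spin (σ i)) ^ 2
          - hfield * ∑ i, spin (σ i))
    (M : (Fin N → Bool) → ℝ)
    (hM : ∀ σ, M σ = (∑ i, spin (σ i)) / N)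
    (EM : ℝ)
    (hEM : EM = (∑ σ : Fin N → Bool, M σ * Real.exp (-H σ)) /
      (∑ σ : Fin N → Bool, Real.exp (-H σ))) :
    |EM - Real.tanh (hfield + β * EM)| ≤
      (β / (N * hfield)) * (3 + β + Real.log (1 + β / hfield)) := by
  have hN0 : (0 : ℝ) < N := by exact_mod_cast hN
  have hH' : ∀ σ, -H σ = β / (2 * N) * (∑ i, spin (σ i)) ^ 2 + hfield * ∑ i, spin (σ i) :=
    fun σ => by rw [hH]; ring
  simp only [hH', hM] at hEM
  -- The Gaussian transformation needs `β > 0`; at `β = 0` the right-hand side vanishes.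
  rcases hβ.eq_or_lt with rfl | hβ
  · have h1 : EM = Real.tanh hfield := by
      have hd := cw_sum_exp N spin hspin hfield
      have hn := cw_sum_mul_exp N spin hspin hfield
      have hc := Real.cosh_pos hfield
      simp only [zero_div, zero_mul, zero_add, mul_comm hfield, div_mul_eq_mul_div] at hEM
      rw [hEM, ← Finset.sum_div, hd, hn]
      field_simp
    simp [h1]
  · rw [cw_hubbard_stratonovich N hN hβ spin hspin] at hEM
    have hmain := cwW_mean_field N (by positivity) (by positivity) hEM
    have harg : (N * hfield / β + N * EM) / (2 * (N / (2 * β))) = hfield + β * EM := by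
      field_simp
    rw [harg] at hmain
    have hlog : 0 ≤ Real.log (1 + β / hfield) :=
      Real.log_nonneg (by linarith [div_pos hβ hh])
    calc _ ≤ 3 / (N * hfield / β) := hmain
      _ = β / (N * hfield) * 3 := by field_simp
      _ ≤ _ := by gcongr; linarith
end

section
/- In the Curie–Weiss model, the mean magnetization ⟨M⟩, viewed as a smooth function of (β, h) ∈ ℝ², satisfies the exact partial differential equation ∂⟨M⟩/∂β = ⟨M⟩ · ∂⟨M⟩/∂h + (1/(2N)) · ∂²⟨M⟩/∂h². -/
/-!
Write `S = ∑ i, σ i` for the total spin and `Zₖ = ∑ σ, S ^ k * exp (β S² / (2N) + h S)` for the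
unnormalised moments, so that `⟨M⟩ = Z₁ / (N Z₀)`. Differentiating the Boltzmann weight in `h` brings
down a factor `S`, and differentiating it in `β` brings down `S² / (2N)`; hence `∂Zₖ/∂h = Zₖ₊₁` and
`∂Zₖ/∂β = Zₖ₊₂ / (2N)` (`hasDerivAt_moment_field`, `hasDerivAt_moment_beta`), i.e. every moment solves
the heat equation `∂Z/∂β = (1/(2N)) ∂²Z/∂h²`. As `⟨M⟩ = (1/N) ∂(log Z₀)/∂h`, the Cole–Hopf
transformation turns this into the Burgers-type equation for `⟨M⟩`: after the quotient rule, both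
sides are the same rational function of `Z₀, Z₁, Z₂, Z₃`.
-/

/-- The unnormalised `k`-th moment `∑ a, S a ^ k * exp (c * b * S a ^ 2 + h * S a)` of a statistic `S`
on a finite configuration space, with inverse temperature `b`, field `h`, and quadratic coupling
`c` (for the Curie–Weiss model `c = 1 / (2N)`). -/
noncomputable def moment {ι : Type*} [Fintype ι] (S : ι → ℝ) (c : ℝ) (k : ℕ) (b h : ℝ) : ℝ :=
  ∑ a, S a ^ k * Real.exp (c * b * S a ^ 2 + h * S a)

lemma hasDerivAt_moment_field {ι : Type*} [Fintype ι] (S : ι → ℝ) (c : ℝ) (k : ℕ) (b h : ℝ) :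
    HasDerivAt (fun x => moment S c k b x) (moment S c (k + 1) b h) h := by
  unfold moment
  refine HasDerivAt.fun_sum fun a _ => ?_
  have h1 : HasDerivAt (fun x => c * b * S a ^ 2 + x * S a) (1 * S a) h :=
    ((hasDerivAt_id h).mul_const (S a)).const_add _
  exact (h1.exp.const_mul (S a ^ k)).congr_deriv (by ring)

lemma hasDerivAt_moment_beta {ι : Type*} [Fintype ι] (S : ι → ℝ) (c : ℝ) (k : ℕ) (b h : ℝ) :
    HasDerivAt (fun x => moment S c k x h) (c * moment S c (k + 2) b h) b := by
  unfold moment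
  rw [Finset.mul_sum]
  refine HasDerivAt.fun_sum fun a _ => ?_
  have h1 : HasDerivAt (fun x => c * x * S a ^ 2 + h * S a) (c * 1 * S a ^ 2) b :=
    (((hasDerivAt_id b).const_mul c).mul_const (S a ^ 2)).add_const _
  exact (h1.exp.const_mul (S a ^ k)).congr_deriv (by ring)

lemma moment_zero_pos {ι : Type*} [Fintype ι] [Nonempty ι] (S : ι → ℝ) (c b h : ℝ) :
    0 < moment S c 0 b h := by
  unfold moment
  exact Finset.sum_pos (fun a _ => by positivity) Finset.univ_nonempty


/-- **Curie–Weiss PDE.** The mean magnetization `⟨M⟩(β,h)` of the Curie–Weiss model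
satisfies the exact partial differential equation
`∂⟨M⟩/∂β = ⟨M⟩ ∂⟨M⟩/∂h + (1/(2N)) ∂²⟨M⟩/∂h²`. -/
theorem curie_weiss_pde
    (N : ℕ) (hN : 1 ≤ N)
    (spin : Bool → ℝ) (hspin : spin = fun b => if b then 1 else -1)
    (H : ℝ → ℝ → (Fin N → Bool) → ℝ)
    (hH : ∀ β h σ, H β h σ = -(β / (2 * N)) * (∑ i, spin (σ i)) ^ 2
          - h * ∑ i, spin (σ i))
    (M : (Fin N → Bool) → ℝ)
    (hM : ∀ σ, M σ = (∑ i, spin (σ i)) / N)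
    (EM : ℝ → ℝ → ℝ)
    (hEM : ∀ β h, EM β h = (∑ σ : Fin N → Bool, M σ * Real.exp (-H β h σ)) /
      (∑ σ : Fin N → Bool, Real.exp (-H β h σ)))
    (β h : ℝ) :
    deriv (fun b => EM b h) β =
      EM β h * deriv (fun x => EM β x) h + (1 / (2 * N)) * deriv (deriv (EM β)) h := by
  have hN0 : (N : ℝ) ≠ 0 := by positivity
  set S : (Fin N → Bool) → ℝ := fun σ => ∑ i, spin (σ i) with hS
  set c : ℝ := 1 / (2 * N) with hc
  have hw : ∀ b x σ, -H b x σ = c * b * S σ ^ 2 + x * S σ := by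
    intro b x σ
    rw [hH, hc]
    ring
  have hE : EM = fun b x => moment S c 1 b x / moment S c 0 b x / N := by
    funext b x
    have hnum : ∑ σ, M σ * Real.exp (-H b x σ) = moment S c 1 b x / N := by
      rw [moment, Finset.sum_div]
      refine Finset.sum_congr rfl fun σ _ => ?_
      rw [hM, hw, pow_one, div_mul_eq_mul_div]
    have hden : ∑ σ, Real.exp (-H b x σ) = moment S c 0 b x := by
      simp only [moment, hw, pow_zero, one_mul]
    rw [hEM, hnum, hden, div_right_comm]
  have hZ : ∀ b x, moment S c 0 b x ≠ 0 := fun b x => (moment_zero_pos S c b x).ne'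
  have hdh : ∀ x, HasDerivAt (EM β)
      ((moment S c 2 β x * moment S c 0 β x - moment S c 1 β x * moment S c 1 β x)
        / moment S c 0 β x ^ 2 / N) x := by
    intro x
    rw [hE]
    exact ((hasDerivAt_moment_field S c 1 β x).fun_div
      (hasDerivAt_moment_field S c 0 β x) (hZ β x)).div_const _
  have hdhh := ((((hasDerivAt_moment_field S c 2 β h).fun_mul
    (hasDerivAt_moment_field S c 0 β h)).fun_sub
    ((hasDerivAt_moment_field S c 1 β h).fun_mul (hasDerivAt_moment_field S c 1 β h))).fun_div
    ((hasDerivAt_moment_field S c 0 β h).fun_pow 2) (pow_ne_zero 2 (hZ β h))).div_const (N : ℝ)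
  have hdb := ((hasDerivAt_moment_beta S c 1 β h).fun_div
    (hasDerivAt_moment_beta S c 0 β h) (hZ β h)).div_const (N : ℝ)
  have hderiv : deriv (EM β) = fun x =>
      (moment S c 2 β x * moment S c 0 β x - moment S c 1 β x * moment S c 1 β x)
        / moment S c 0 β x ^ 2 / N := funext fun x => (hdh x).deriv
  have hEb : (fun b => EM b h) = fun b => moment S c 1 b h / moment S c 0 b h / N := by rw [hE]
  have hEh : EM β h = moment S c 1 β h / moment S c 0 β h / N := by rw [hE]
  rw [show deriv (fun x => EM β x) h = _ from (hdh h).deriv, hderiv, hdhh.deriv, hEb, hdb.deriv, hEh]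
  have hZ0 := hZ β h
  norm_num only [Nat.reduceAdd, Nat.reduceSub, Nat.cast_ofNat, pow_one]
  generalize moment S c 0 β h = Z0 at *
  generalize moment S c 1 β h = Z1
  generalize moment S c 2 β h = Z2
  generalize moment S c 3 β h = Z3
  rw [hc]
  field_simp
  ring
end

section
/- Let α > 1 and K > 0 be such that α·tanh(x) > x for all x ∈ (0,K). Let J be a symmetric N×N real matrix with nonnegative entries, h ∈ ℝ^N with h_i > 0 for all i, and m ∈ ℝ^N with m_i ≥ 0 for all i. Let ε ≥ 0 with min_i h_i > α·ε, and assume m_i ≥ tanh(h_i + (Jm)_i) − ε for all i. If there exists an index i with (Jm)_i ≥ α·m_i, then max_i (h_i + (Jm)_i) ≥ K. -/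
/-- **Positive Gibbs state selection (Section 3, third application).** Let `α > 1`, `K > 0`
with `α tanh(x) > x` on `(0,K)`. If `h > 0` entrywise with `min_i h_i > αε`, `m ≥ 0`
satisfies the approximate mean-field inequality `m_i ≥ tanh(h_i + (Jm)_i) - ε` for all `i`,
and `(Jm)_i ≥ α m_i` holds for some `i`, then `max_i (h_i + (Jm)_i) ≥ K`. -/
theorem positive_state_selection
    (N : ℕ) [NeZero N]
    (α K : ℝ) (hα : 1 < α) (hK : 0 < K)
    (htanh : ∀ x : ℝ, 0 < x → x < K → x < α * Real.tanh x)
    (J : Matrix (Fin N) (Fin N) ℝ)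
    (hJsym : ∀ i j, J i j = J j i)
    (hJnonneg : ∀ i j, 0 ≤ J i j)
    (h : Fin N → ℝ) (hh : ∀ i, 0 < h i)
    (m : Fin N → ℝ) (hm : ∀ i, 0 ≤ m i)
    (ε : ℝ) (hε : 0 ≤ ε)
    (hhe : α * ε < ⨅ i, h i)
    (hmf : ∀ i, Real.tanh (h i + ∑ j, J i j * m j) - ε ≤ m i)
    (hex : ∃ i, α * m i ≤ ∑ j, J i j * m j) :
    K ≤ ⨆ i, (h i + ∑ j, J i j * m j) := by
  by_contra! hlt
  obtain ⟨i, hi⟩ := hex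
  have hxK : h i + ∑ j, J i j * m j < K :=
    (le_ciSup (Set.finite_range fun i => h i + ∑ j, J i j * m j).bddAbove i).trans_lt hlt
  have hx0 : 0 < h i + ∑ j, J i j * m j :=
    add_pos_of_pos_of_nonneg (hh i)
      (Finset.sum_nonneg fun j _ => mul_nonneg (hJnonneg i j) (hm j))
  have hεi : α * ε < h i := hhe.trans_le (ciInf_le (Set.finite_range h).bddBelow i)
  have htan := htanh _ hx0 hxK
  -- With `x = h i + (Jm) i`: `α m i ≥ α tanh x - α ε > x - α ε > (Jm) i`, contradicting `hi`.
  have hmul := mul_le_mul_of_nonneg_left (hmf i) (zero_le_one.trans hα.le)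
  rw [mul_sub] at hmul
  linarith
end
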